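/- Let A be a skew-symmetric n×n real matrix and T ⊆ I. Define p : 2^I → {−1,0,+1} by p(S) = sign Pf(A_{S Δ T}). Then p is an oriented even Δ-matroid, and its collection of bases {S : p(S) ≠ 0} = {S : Pf(A_{S Δ T}) ≠ 0} is the Δ-matroid represented by A and T in Bouchet's sense. -/

import Mathlib

/-- The Pfaffian of an `N × N` matrix (intended for skew-symmetric matrices):
`Pf(A) = ∑_{σ ∈ S'_N} sign(σ) ∏_{k=1}^{N/2} a_{σ(2k-1) σ(2k)}`, where `S'_N` is the
set of permutations `σ` of `{0, …, N-1}` such that `σ(2k)` is minimal among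
`σ(2k), σ(2k+1), …, σ(N-1)` for each `k`.  It is `0` for odd `N` and `1` for `N = 0`. -/
noncomputable def pfaffian {N : ℕ} (A : Matrix (Fin N) (Fin N) ℝ) : ℝ :=
  if h : 2 ∣ N then
    ∑ σ ∈ Finset.univ.filter
        (fun σ : Equiv.Perm (Fin N) =>
          ∀ p q : Fin N, 2 ∣ (p : ℕ) → p ≤ q → σ p ≤ σ q),
      ((Equiv.Perm.sign σ : ℤ) : ℝ) *
        ∏ k : Fin (N / 2),
          A (σ ⟨2 * (k : ℕ), by have := k.2; omega⟩)
            (σ ⟨2 * (k : ℕ) + 1, by have := k.2; omega⟩)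
  else 0

/-- The Pfaffian of the principal minor of `A` indexed by the subset `S`,
with rows and columns of the minor taken in increasing order of index. -/
noncomputable def pfMinor {n : ℕ} (A : Matrix (Fin n) (Fin n) ℝ) (S : Finset (Fin n)) : ℝ :=
  pfaffian (Matrix.of fun p q : Fin S.card =>
    A ((S.orderIsoOfFin rfl p : S) : Fin n) ((S.orderIsoOfFin rfl q : S) : Fin n))


/-- An **oriented even Δ-matroid** on `I = {1,…,n}`: a map
`p : 2^I → {+1, −1, 0}` such that (1) `p` is not identically zero; (2) any two sets
with nonzero value have cardinalities of equal parity; (3) whenever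
`A Δ B = {i₁ < … < i_l}` and, for some `w ∈ {+1, −1}`, all the quantities
`κ_j = w (−1)^j p(A Δ {i_j}) p(B Δ {i_j})` are nonnegative, they are all zero. -/
def IsOrientedEvenDeltaMatroid {n : ℕ} (p : Finset (Fin n) → SignType) : Prop :=
  (∃ S, p S ≠ 0) ∧
  (∀ A B : Finset (Fin n), p A ≠ 0 → p B ≠ 0 → A.card % 2 = B.card % 2) ∧
  (∀ A B : Finset (Fin n), ∀ w : SignType, (w = 1 ∨ w = -1) →
    (∀ j : Fin (symmDiff A B).card,
      0 ≤ w * (-1 : SignType) ^ ((j : ℕ) + 1) *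
        p (symmDiff A {((symmDiff A B).orderIsoOfFin rfl j : Fin n)}) *
        p (symmDiff B {((symmDiff A B).orderIsoOfFin rfl j : Fin n)})) →
    (∀ j : Fin (symmDiff A B).card,
      w * (-1 : SignType) ^ ((j : ℕ) + 1) *
        p (symmDiff A {((symmDiff A B).orderIsoOfFin rfl j : Fin n)}) *
        p (symmDiff B {((symmDiff A B).orderIsoOfFin rfl j : Fin n)}) = 0))

/-- The determinant of the principal minor of `A` indexed by the subset `S`, rows
and columns taken in increasing order. -/
noncomputable def detMinor {n : ℕ} (A : Matrix (Fin n) (Fin n) ℝ) (S : Finset (Fin n)) : ℝ :=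
  Matrix.det (Matrix.of fun p q : Fin S.card =>
    A ((S.orderIsoOfFin rfl p : S) : Fin n) ((S.orderIsoOfFin rfl q : S) : Fin n))



noncomputable def sg {n : ℕ} (i : Fin n) (S : Finset (Fin n)) : ℝ :=
  ∏ k ∈ S, (if k < i then (-1 : ℝ) else 1)

theorem sg_insert {n : ℕ} (i m : Fin n) (S : Finset (Fin n)) (h : m ∉ S) :
    sg i (insert m S) = (if m < i then (-1 : ℝ) else 1) * sg i S := by
  unfold sg; rw [Finset.prod_insert h]

theorem sg_erase {n : ℕ} (i m : Fin n) (S : Finset (Fin n)) (h : m ∈ S) :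
    sg i (S.erase m) = (if m < i then (-1 : ℝ) else 1) * sg i S := by
  unfold sg; rw [← Finset.mul_prod_erase S _ h]; split_ifs <;> ring

theorem sg_sq {n : ℕ} (i : Fin n) (S : Finset (Fin n)) : sg i S * sg i S = 1 := by
  unfold sg; rw [← Finset.prod_mul_distrib]
  apply Finset.prod_eq_one; intro k _; split_ifs <;> norm_num

theorem sg_ne {n : ℕ} (i : Fin n) (S : Finset (Fin n)) : sg i S ≠ 0 := by
  intro h; have := sg_sq i S; rw [h] at this; norm_num at this

theorem sg_anti {n : ℕ} (j k : Fin n) (R : Finset (Fin n)) (hj : j ∈ R) (hk : k ∈ R)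
    (hjk : j ≠ k) : sg j R * sg k (R.erase j) = -(sg k R * sg j (R.erase k)) := by
  rw [sg_erase _ _ _ hj, sg_erase _ _ _ hk]
  rcases lt_or_gt_of_ne hjk with h | h
  · simp [h, not_lt.mpr h.le]; ring
  · simp [h, not_lt.mpr h.le]; ring

theorem sg_symmDiff {n : ℕ} (i : Fin n) (S B : Finset (Fin n)) :
    sg i (symmDiff S B) = sg i S * sg i B := by
  have key : ∀ S : Finset (Fin n), sg i S = ∏ k, if k ∈ S then (if k < i then (-1 : ℝ) else 1) else 1 := by
    intro S; unfold sg; rw [Finset.prod_ite_mem]; simp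
  rw [key, key, key, ← Finset.prod_mul_distrib]
  apply Finset.prod_congr rfl
  intro k _
  by_cases h1 : k ∈ S <;> by_cases h2 : k ∈ B <;> by_cases h3 : k < i <;>
    simp [Finset.mem_symmDiff, h1, h2, h3]

/-- the expansion operator -/
noncomputable def dd {n : ℕ} (A : Matrix (Fin n) (Fin n) ℝ) (P : Finset (Fin n) → ℝ)
    (i : Fin n) (S : Finset (Fin n)) : ℝ :=
  ∑ j ∈ S, A i j * sg j S * P (S.erase j)

def Rec {n : ℕ} (A : Matrix (Fin n) (Fin n) ℝ) (P : Finset (Fin n) → ℝ) : Prop :=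
  ∀ (m : Fin n) (R : Finset (Fin n)), (∀ k ∈ R, m < k) → P (insert m R) = dd A P m R

theorem anti_double {n : ℕ} (R : Finset (Fin n)) (f : Fin n → Fin n → ℝ) :
    ∑ j ∈ R, ∑ k ∈ R.erase j, f j k = ∑ k ∈ R, ∑ j ∈ R.erase k, f j k := by
  apply Finset.sum_comm'
  intro x y; simp only [Finset.mem_erase]; tauto

/-- `∑_{j ∈ R} a_ij s(j,S) P(S - j)` for `S = m ∪ R`. -/
theorem dd_insert {n : ℕ} (A : Matrix (Fin n) (Fin n) ℝ) (P : Finset (Fin n) → ℝ)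
    (hP : Rec A P) (i m : Fin n) (R : Finset (Fin n)) (hm : ∀ k ∈ R, m < k) :
    dd A P i (insert m R) = A i m * P R + ∑ k ∈ R, A m k * sg k R * dd A P i (R.erase k) := by
  have hmR : m ∉ R := fun h => lt_irrefl _ (hm m h)
  have h1 : sg m (insert m R) = 1 := by
    unfold sg; apply Finset.prod_eq_one; intro k hk
    rw [if_neg]
    rcases Finset.mem_insert.1 hk with h | h
    · simp [h]
    · exact not_lt.mpr (hm k h).le
  rw [dd, Finset.sum_insert hmR, h1, Finset.erase_insert hmR, mul_one]
  congr 1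
  have h2 : ∀ j ∈ R, A i j * sg j (insert m R) * P ((insert m R).erase j) =
      ∑ k ∈ R.erase j, A m k * sg k R * (A i j * sg j (R.erase k) * P ((R.erase k).erase j)) := by
    intro j hj
    rw [sg_insert _ _ _ hmR, if_pos (hm j hj), Finset.erase_insert_of_ne (hm j hj).ne,
      hP m (R.erase j) (fun k hk => hm k (Finset.mem_of_mem_erase hk)), dd, Finset.mul_sum]
    apply Finset.sum_congr rfl
    intro k hk
    have hk' := Finset.mem_erase.1 hk
    have := sg_anti j k R hj hk'.2 hk'.1.symm
    rw [Finset.erase_right_comm]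
    linear_combination (-A i j * A m k * P ((R.erase k).erase j)) * this
  rw [Finset.sum_congr rfl h2, anti_double]
  apply Finset.sum_congr rfl
  intro k _
  rw [dd, Finset.mul_sum]

theorem dd_eq {n : ℕ} (A : Matrix (Fin n) (Fin n) ℝ) (P : Finset (Fin n) → ℝ)
    (hA : ∀ i j, A i j = - A j i) (hP : Rec A P) (N : ℕ) :
    ∀ (S : Finset (Fin n)), S.card = N → ∀ i : Fin n,
      dd A P i S = if i ∈ S then 0 else sg i S * P (insert i S) := by
  induction N using Nat.strong_induction_on with
  | _ N ih =>
  intro S hS i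
  by_cases hi : ∀ k ∈ S, i < k
  · have : i ∉ S := fun h => lt_irrefl _ (hi i h)
    rw [if_neg this, hP i S hi]
    have : sg i S = 1 := by
      unfold sg; apply Finset.prod_eq_one; intro k hk
      rw [if_neg (not_lt.mpr (hi k hk).le)]
    rw [this, one_mul]
  · have hne : S.Nonempty := by
      rw [Finset.nonempty_iff_ne_empty]; rintro rfl; simp at hi
    obtain ⟨m, R, hm, rfl, him⟩ : ∃ m R, (∀ k ∈ R, m < k) ∧ S = insert m R ∧ m ≤ i := by
      refine ⟨S.min' hne, S.erase (S.min' hne), ?_, ?_, ?_⟩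
      · intro k hk
        have hk' := Finset.mem_erase.1 hk
        exact lt_of_le_of_ne (S.min'_le k hk'.2) hk'.1.symm
      · rw [Finset.insert_erase (S.min'_mem hne)]
      · push Not at hi
        obtain ⟨k, hk, hki⟩ := hi
        exact (S.min'_le k hk).trans hki
    have hmR : m ∉ R := fun h => lt_irrefl _ (hm m h)
    rw [dd_insert A P hP i m R hm]
    have hc := Finset.card_insert_of_notMem hmR
    have hI : ∀ k ∈ R, dd A P i (R.erase k) =
        if i ∈ R.erase k then 0 else sg i (R.erase k) * P (insert i (R.erase k)) := by
      intro k hk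
      have := Finset.card_erase_lt_of_mem hk
      exact ih _ (by omega) _ rfl i
    rw [Finset.sum_congr rfl (fun k hk => by rw [hI k hk])]
    rcases him.eq_or_lt with rfl | him
    · -- i = m
      rw [if_pos (Finset.mem_insert_self _ _)]
      have hmm : A m m = 0 := by linarith [hA m m]
      rw [hmm, zero_mul, zero_add]
      have hT := dd_insert A P hP m m R hm
      have hrew : ∀ k ∈ R, A m k * sg k R * (if m ∈ R.erase k then 0 else
          sg m (R.erase k) * P (insert m (R.erase k))) =
          ∑ j ∈ R.erase k, A m k * sg k R * (A m j * sg j (R.erase k) * P ((R.erase k).erase j)) := by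
        intro k hk
        rw [← hI k hk, dd, Finset.mul_sum]
      rw [Finset.sum_congr rfl hrew]
      have h1 := anti_double R (fun k j => A m k * sg k R * (A m j * sg j (R.erase k) * P ((R.erase k).erase j)))
      have h2 : ∑ k ∈ R, ∑ j ∈ R.erase k, A m j * sg j R * (A m k * sg k (R.erase j) * P ((R.erase j).erase k))
          = - ∑ k ∈ R, ∑ j ∈ R.erase k, A m k * sg k R * (A m j * sg j (R.erase k) * P ((R.erase k).erase j)) := by
        rw [← Finset.sum_neg_distrib]
        apply Finset.sum_congr rfl
        intro k hk
        rw [← Finset.sum_neg_distrib]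
        apply Finset.sum_congr rfl
        intro j hj
        have hj' := Finset.mem_erase.1 hj
        have := sg_anti j k R hj'.2 hk hj'.1
        rw [Finset.erase_right_comm]
        linear_combination (A m j * A m k * P ((R.erase k).erase j)) * this
      linarith
    · by_cases hiR : i ∈ R
      · rw [if_pos (Finset.mem_insert_of_mem hiR), Finset.sum_eq_single_of_mem i hiR]
        · rw [if_neg (Finset.notMem_erase _ _), Finset.insert_erase hiR, sg_erase _ _ _ hiR,
            if_neg (lt_irrefl _), hA i m]
          linear_combination (A m i * P R) * sg_sq i R
        · intro k hk hki
          rw [if_pos (Finset.mem_erase.2 ⟨hki.symm, hiR⟩), mul_zero]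
      · have hiS : i ∉ insert m R := by
          simp [Finset.mem_insert, him.ne', hiR]
        rw [if_neg hiS, Finset.insert_comm, hP m (insert i R), dd, Finset.sum_insert hiR,
          Finset.erase_insert hiR, sg_insert _ _ _ hmR, if_pos him, sg_insert _ _ _ hiR,
          if_neg (lt_irrefl _), mul_add, Finset.mul_sum, hA i m]
        · congr 1
          · linear_combination (A m i * P R) * sg_sq i R
          · apply Finset.sum_congr rfl
            intro k hk
            have hki : k ≠ i := fun h => hiR (h ▸ hk)
            rw [if_neg (fun h => hiR (Finset.mem_of_mem_erase h)),
              Finset.erase_insert_of_ne hki.symm, sg_insert _ _ _ hiR, sg_erase _ _ _ hk]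
            rcases lt_or_gt_of_ne hki with h | h
            · simp only [h, not_lt.mpr h.le, if_true, if_false]; ring
            · simp only [h, not_lt.mpr h.le, if_true, if_false]; ring
        · intro k hk
          rcases Finset.mem_insert.1 hk with h | h
          · rw [h]; exact him
          · exact hm k h

theorem wick {n : ℕ} (A : Matrix (Fin n) (Fin n) ℝ) (P : Finset (Fin n) → ℝ)
    (hA : ∀ i j, A i j = - A j i) (hP : Rec A P) (S B : Finset (Fin n)) :
    ∑ i ∈ symmDiff S B, sg i (symmDiff S B) * P (symmDiff S {i}) * P (symmDiff B {i}) = 0 := by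
  have hD : ∀ i S, dd A P i S = if i ∈ S then 0 else sg i S * P (insert i S) :=
    fun i S => dd_eq A P hA hP _ S rfl i
  have ins : ∀ (i : Fin n) (S : Finset (Fin n)), i ∉ S → symmDiff S {i} = insert i S := by
    intro i S h; ext x; simp only [Finset.mem_symmDiff, Finset.mem_singleton, Finset.mem_insert]
    grind
  have era : ∀ (i : Fin n) (S : Finset (Fin n)), i ∈ S → symmDiff S {i} = S.erase i := by
    intro i S h; ext x; simp only [Finset.mem_symmDiff, Finset.mem_singleton, Finset.mem_erase]
    grind
  have half : ∀ S B : Finset (Fin n),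
      ∑ i ∈ B \ S, sg i (symmDiff S B) * P (symmDiff S {i}) * P (symmDiff B {i}) =
      ∑ i ∈ B, ∑ j ∈ S, A i j * (sg i B * P (B.erase i)) * (sg j S * P (S.erase j)) := by
    intro S B
    have : ∀ i ∈ B, ∑ j ∈ S, A i j * (sg i B * P (B.erase i)) * (sg j S * P (S.erase j)) =
        if i ∉ S then sg i (symmDiff S B) * P (symmDiff S {i}) * P (symmDiff B {i}) else 0 := by
      intro i hi
      have h1 : ∑ j ∈ S, A i j * (sg i B * P (B.erase i)) * (sg j S * P (S.erase j)) =
          (sg i B * P (B.erase i)) * dd A P i S := by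
        rw [dd, Finset.mul_sum]
        apply Finset.sum_congr rfl; intro j _; ring
      rw [h1, hD]
      by_cases h : i ∈ S
      · simp [h]
      · rw [if_neg h, if_pos h, sg_symmDiff, ins i S h, era i B hi]; ring
    rw [Finset.sum_congr rfl this, ← Finset.sum_filter, Finset.sdiff_eq_filter]
  have hs : symmDiff S B = (B \ S) ∪ (S \ B) := by
    rw [symmDiff_def, sup_comm]; rfl
  have hdis : Disjoint (B \ S) (S \ B) := by
    rw [Finset.disjoint_left]; intro x; simp only [Finset.mem_sdiff]; tauto
  have h1 := half S B
  have h2 := half B S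
  rw [symmDiff_comm B S] at h2
  have hsum : ∑ i ∈ symmDiff S B, sg i (symmDiff S B) * P (symmDiff S {i}) * P (symmDiff B {i}) =
    ∑ i ∈ B \ S, sg i (symmDiff S B) * P (symmDiff S {i}) * P (symmDiff B {i}) +
    ∑ i ∈ S \ B, sg i (symmDiff S B) * P (symmDiff S {i}) * P (symmDiff B {i}) := by
    conv_lhs => rw [Finset.sum_congr hs (fun _ _ => rfl)]
    rw [Finset.sum_union hdis]
  rw [hsum, h1]
  have h3 : ∑ i ∈ S \ B, sg i (symmDiff S B) * P (symmDiff S {i}) * P (symmDiff B {i}) =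
      ∑ i ∈ S \ B, sg i (symmDiff S B) * P (symmDiff B {i}) * P (symmDiff S {i}) :=
    Finset.sum_congr rfl (fun i _ => by ring)
  rw [h3, h2, Finset.sum_comm, ← Finset.sum_add_distrib]
  apply Finset.sum_eq_zero
  intro i _
  rw [← Finset.sum_add_distrib]
  apply Finset.sum_eq_zero
  intro j _
  rw [hA i j]; ring

theorem detMinor_zero_iff {n : ℕ} (A : Matrix (Fin n) (Fin n) ℝ) (S : Finset (Fin n)) :
    detMinor A S = 0 ↔ ∃ w : Fin n → ℝ, (∃ i ∈ S, w i ≠ 0) ∧ ∀ i ∈ S, ∑ j ∈ S, A i j * w j = 0 := by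
  have h1 : detMinor A S = (A.submatrix (fun i : S => (i : Fin n)) (fun i : S => (i : Fin n))).det := by
    rw [← Matrix.det_submatrix_equiv_self (S.orderIsoOfFin rfl).toEquiv]
    rfl
  rw [h1, ← Matrix.exists_mulVec_eq_zero_iff]
  constructor
  · rintro ⟨v, hv, h⟩
    obtain ⟨i, hi⟩ := Function.ne_iff.1 hv
    refine ⟨fun i => if h : i ∈ S then v ⟨i, h⟩ else 0, ⟨i, i.2, by simpa using hi⟩, ?_⟩
    intro i hi
    have := congrFun h ⟨i, hi⟩
    simp only [Matrix.mulVec, dotProduct, Matrix.submatrix_apply, Pi.zero_apply] at this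
    rw [← Finset.sum_coe_sort, ← this]
    apply Finset.sum_congr rfl
    intro j _
    simp
  · rintro ⟨w, ⟨i, hi, hwi⟩, h⟩
    refine ⟨fun i => w i, fun h0 => hwi (congrFun h0 ⟨i, hi⟩), ?_⟩
    ext i
    have := h i i.2
    rw [← Finset.sum_coe_sort] at this
    simpa [Matrix.mulVec, dotProduct] using this

theorem det_iff {n : ℕ} (A : Matrix (Fin n) (Fin n) ℝ) (P : Finset (Fin n) → ℝ)
    (hA : ∀ i j, A i j = - A j i) (hP : Rec A P) (h0 : P ∅ ≠ 0) (S : Finset (Fin n)) :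
    P S ≠ 0 ↔ detMinor A S ≠ 0 := by
  have hD : ∀ i S, dd A P i S = if i ∈ S then 0 else sg i S * P (insert i S) :=
    fun i S => dd_eq A P hA hP _ S rfl i
  rw [not_iff_not, detMinor_zero_iff]
  constructor
  · intro hS
    obtain ⟨B, hB, hmax⟩ := Finset.exists_max_image (S.powerset.filter (fun B => P B ≠ 0))
      Finset.card ⟨∅, by simp [h0]⟩
    simp only [Finset.mem_filter, Finset.mem_powerset] at hB hmax
    have hBS : B ≠ S := fun h => hB.2 (h ▸ hS)
    obtain ⟨l, hlS, hlB⟩ := Finset.exists_of_ssubset (hB.1.ssubset_of_ne hBS)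
    have hsub : insert l B ⊆ S := Finset.insert_subset hlS hB.1
    refine ⟨fun j => if j ∈ insert l B then sg j (insert l B) * P ((insert l B).erase j) else 0,
      ⟨l, hlS, ?_⟩, ?_⟩
    · simp only
      rw [if_pos (Finset.mem_insert_self _ _), Finset.erase_insert hlB]
      exact mul_ne_zero (sg_ne _ _) hB.2
    · intro i hi
      have h2 : dd A P i (insert l B) = 0 := by
        rw [hD]
        split_ifs with h
        · rfl
        · by_contra hne
          have hPne := right_ne_zero_of_mul hne
          have := hmax _ ⟨Finset.insert_subset hi hsub, hPne⟩
          rw [Finset.card_insert_of_notMem h, Finset.card_insert_of_notMem hlB] at this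
          omega
      refine Eq.trans ?_ h2
      rw [dd, ← Finset.sum_subset hsub]
      · apply Finset.sum_congr rfl
        intro j hj
        simp only [if_pos hj]; ring
      · intro j _ hj
        simp only [if_neg hj, mul_zero]
  · rintro ⟨w, ⟨l, hl, hwl⟩, hw⟩
    have h1 : ∑ i ∈ S, w i * dd A P i (S.erase l) = 0 := by
      simp only [dd, Finset.mul_sum]
      rw [Finset.sum_comm]
      apply Finset.sum_eq_zero
      intro j hj
      have := hw j (Finset.mem_of_mem_erase hj)
      calc _ = -(∑ i ∈ S, A j i * w i) * (sg j (S.erase l) * P ((S.erase l).erase j)) := by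
            rw [← Finset.sum_neg_distrib, Finset.sum_mul]
            apply Finset.sum_congr rfl
            intro i _; rw [hA i j]; ring
        _ = 0 := by rw [this]; ring
    rw [Finset.sum_eq_single_of_mem l hl, hD, if_neg (Finset.notMem_erase _ _),
      Finset.insert_erase hl] at h1
    · simpa [hwl, sg_ne] using h1
    · intro i hi hil
      rw [hD, if_pos (Finset.mem_erase.2 ⟨hil, hi⟩), mul_zero]

theorem pfaffian_odd {N : ℕ} (A : Matrix (Fin N) (Fin N) ℝ) (h : ¬ 2 ∣ N) : pfaffian A = 0 := by
  unfold pfaffian; rw [dif_neg h]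

theorem pfMinor_empty {n : ℕ} (A : Matrix (Fin n) (Fin n) ℝ) : pfMinor A ∅ = 1 := by
  have : ∀ M : Matrix (Fin 0) (Fin 0) ℝ, pfaffian M = 1 := by
    intro M
    unfold pfaffian
    rw [dif_pos (by norm_num), Finset.sum_eq_single_of_mem 1]
    · simp
    · simp
    · intro b _ hb; exact absurd (Subsingleton.elim b 1) hb
  exact this _

/-- extend a permutation by a pair `0, j+1` in front -/
def ext2 {N : ℕ} (j : Fin (N + 1)) (τ : Equiv.Perm (Fin N)) : Equiv.Perm (Fin (N + 2)) :=
  Equiv.Perm.decomposeFin.symm (0, (Fin.cycleRange j).symm * Equiv.Perm.decomposeFin.symm (0, τ))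

theorem ext2_zero {N : ℕ} (j : Fin (N + 1)) (τ : Equiv.Perm (Fin N)) : ext2 j τ 0 = 0 := by
  simp [ext2]

theorem ext2_one {N : ℕ} (j : Fin (N + 1)) (τ : Equiv.Perm (Fin N)) :
    ext2 j τ (Fin.succ 0) = j.succ := by
  rw [ext2, Equiv.Perm.decomposeFin_symm_apply_succ]
  simp

theorem ext2_succ {N : ℕ} (j : Fin (N + 1)) (τ : Equiv.Perm (Fin N)) (k : Fin N) :
    ext2 j τ k.succ.succ = (j.succAbove (τ k)).succ := by
  rw [ext2, Equiv.Perm.decomposeFin_symm_apply_succ]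
  simp

theorem ext2_sign {N : ℕ} (j : Fin (N + 1)) (τ : Equiv.Perm (Fin N)) :
    Equiv.Perm.sign (ext2 j τ) = (-1) ^ (j : ℕ) * Equiv.Perm.sign τ := by
  simp [ext2, Equiv.Perm.decomposeFin.symm_sign, Equiv.Perm.sign_mul, Equiv.Perm.sign_symm]

theorem ext2_inj {N : ℕ} (j j' : Fin (N + 1)) (τ τ' : Equiv.Perm (Fin N))
    (h : ext2 j τ = ext2 j' τ') : j = j' ∧ τ = τ' := by
  have h1 : j = j' := by
    have := congrArg (fun σ => σ (Fin.succ 0)) h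
    simpa only [ext2_one, Fin.succ_inj] using this
  subst h1
  refine ⟨rfl, ?_⟩
  ext k
  have := congrArg (fun σ => σ k.succ.succ) h
  simp only [ext2_succ, Fin.succ_inj] at this
  rw [Fin.succAbove_right_injective this]

theorem fix_zero {N : ℕ} (σ : Equiv.Perm (Fin (N + 1))) (h : σ 0 = 0) :
    ∃ ρ, σ = Equiv.Perm.decomposeFin.symm (0, ρ) := by
  refine ⟨(Equiv.Perm.decomposeFin σ).2, ?_⟩
  have h2 : (Equiv.Perm.decomposeFin σ).1 = 0 := by
    have := Equiv.Perm.decomposeFin_symm_apply_zero (Equiv.Perm.decomposeFin σ).1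
      (Equiv.Perm.decomposeFin σ).2
    rw [Prod.mk.eta, Equiv.symm_apply_apply] at this
    rw [← this, h]
  rw [← h2, Prod.mk.eta, Equiv.symm_apply_apply]

theorem ext2_surj {N : ℕ} (σ : Equiv.Perm (Fin (N + 2))) (h : σ 0 = 0) :
    ∃ j τ, σ = ext2 j τ := by
  obtain ⟨ρ, rfl⟩ := fix_zero σ h
  obtain ⟨τ, hτ⟩ := fix_zero ((Fin.cycleRange (ρ 0)) * ρ) (by simp)
  refine ⟨ρ 0, τ, ?_⟩
  rw [ext2, ← hτ]
  congr 2
  ext k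
  simp

theorem pfaffian_succ {N : ℕ} (A : Matrix (Fin (N + 2)) (Fin (N + 2)) ℝ) :
    pfaffian A = ∑ j : Fin (N + 1), A 0 j.succ * (-1) ^ (j : ℕ) *
      pfaffian (A.submatrix (fun k => (j.succAbove k).succ) (fun k => (j.succAbove k).succ)) := by
  by_cases hN : 2 ∣ N
  swap
  · rw [pfaffian_odd _ (by omega)]
    symm
    apply Finset.sum_eq_zero
    intro j _
    rw [pfaffian_odd _ hN, mul_zero]
  unfold pfaffian
  rw [dif_pos (by omega)]
  simp only [dif_pos hN, Finset.mul_sum]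
  rw [← Finset.sum_product']
  symm
  refine Finset.sum_bij (fun x _ => ext2 x.1 x.2) ?_ ?_ ?_ ?_
  · rintro ⟨j, τ⟩ hx
    simp only [Finset.mem_product, Finset.mem_filter, Finset.mem_univ, true_and] at hx ⊢
    intro p q hp hpq
    refine Fin.cases ?_ (fun p => ?_) p hp hpq
    · intro _ _; rw [ext2_zero]; exact Fin.zero_le _
    · intro hp hpq
      refine Fin.cases ?_ (fun p => ?_) p hp hpq
      · intro hp; simp at hp
      · intro hp hpq
        have hq1 : q ≠ 0 := by rintro rfl; simp at hpq
        obtain ⟨q, rfl⟩ := Fin.exists_succ_eq.2 hq1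
        have hpq := Fin.succ_le_succ_iff.1 hpq
        have hq1 : q ≠ 0 := by rintro rfl; simp at hpq
        obtain ⟨q, rfl⟩ := Fin.exists_succ_eq.2 hq1
        have hpq := Fin.succ_le_succ_iff.1 hpq
        rw [ext2_succ, ext2_succ, Fin.succ_le_succ_iff, (Fin.strictMono_succAbove j).le_iff_le]
        apply hx _ _ _ hpq
        simp only [Fin.val_succ] at hp
        omega
  · rintro ⟨j, τ⟩ _ ⟨j', τ'⟩ _ h
    obtain ⟨rfl, rfl⟩ := ext2_inj _ _ _ _ h
    rfl
  · intro σ hσ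
    simp only [Finset.mem_filter, Finset.mem_univ, true_and] at hσ
    have h0 : σ 0 = 0 := by
      have := hσ 0 (σ.symm 0) (by simp) (Fin.zero_le _)
      simpa using this
    obtain ⟨j, τ, rfl⟩ := ext2_surj σ h0
    refine ⟨⟨j, τ⟩, ?_, rfl⟩
    simp only [Finset.mem_product, Finset.mem_filter, Finset.mem_univ, true_and]
    intro p q hp hpq
    have := hσ p.succ.succ q.succ.succ (by simp only [Fin.val_succ]; omega) (by simpa using hpq)
    rwa [ext2_succ, ext2_succ, Fin.succ_le_succ_iff, (Fin.strictMono_succAbove j).le_iff_le] at this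
  · rintro ⟨j, τ⟩ _
    have hdiv : (N + 2) / 2 = N / 2 + 1 := by omega
    have hprod : ∀ (g : ℕ → ℝ), ∏ k : Fin ((N + 2) / 2), g k = g 0 * ∏ k : Fin (N / 2), g (k + 1) := by
      intro g
      rw [Fin.prod_univ_eq_prod_range, hdiv, Finset.prod_range_succ', mul_comm,
        Fin.prod_univ_eq_prod_range (fun k => g (k + 1))]
    let g : ℕ → ℝ := fun k => if h : 2 * k + 1 < N + 2 then
      A (ext2 j τ ⟨2 * k, by omega⟩) (ext2 j τ ⟨2 * k + 1, h⟩) else 0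
    have hL : ∀ k : Fin ((N + 2) / 2), A (ext2 j τ ⟨2 * (k : ℕ), by have := k.2; omega⟩)
        (ext2 j τ ⟨2 * (k : ℕ) + 1, by have := k.2; omega⟩) = g k := by
      intro k
      have := k.2
      simp only [g]
      rw [dif_pos (by omega)]
    have hR : ∀ k : Fin (N / 2), g (k + 1) =
        A (j.succAbove (τ ⟨2 * (k : ℕ), by have := k.2; omega⟩)).succ
          (j.succAbove (τ ⟨2 * (k : ℕ) + 1, by have := k.2; omega⟩)).succ := by
      intro k
      have := k.2
      simp only [g]
      rw [dif_pos (by omega), ← ext2_succ, ← ext2_succ]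
      congr 2
    have hz : g 0 = A 0 j.succ := by
      simp only [g]
      rw [dif_pos (by omega)]
      have h1 := ext2_zero j τ
      have h2 := ext2_one j τ
      rw [← h2]
      conv_rhs => rw [← h1]
      rfl
    simp only [hL]
    rw [hprod, hz]
    simp only [hR, Matrix.submatrix_apply, ext2_sign]
    push_cast
    ring

theorem pfMinor_eq {n N : ℕ} (A : Matrix (Fin n) (Fin n) ℝ) (S : Finset (Fin n))
    (f : Fin N → Fin n) (hf : StrictMono f) (hS : Finset.univ.image f = S) :
    pfMinor A S = pfaffian (A.submatrix f f) := by
  have hc : S.card = N := by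
    rw [← hS, Finset.card_image_of_injective _ hf.injective]; simp
  subst hc
  have : f = S.orderEmbOfFin rfl :=
    Finset.orderEmbOfFin_unique rfl (fun x => (Finset.ext_iff.1 hS _).1
      (Finset.mem_image_of_mem _ (Finset.mem_univ _))) hf
  rw [this]
  rfl

theorem sg_image {n N : ℕ} (f : Fin N → Fin n) (hf : StrictMono f) (j : Fin N) :
    sg (f j) (Finset.univ.image f) = (-1) ^ (j : ℕ) := by
  unfold sg
  rw [Finset.prod_image (fun _ _ _ _ h => hf.injective h)]
  simp only [hf.lt_iff_lt]
  rw [Finset.prod_ite]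
  have : (Finset.univ.filter (fun x => x < j)) = Finset.Iio j := by ext; simp
  simp [this]

theorem pfMinor_rec {n : ℕ} (A : Matrix (Fin n) (Fin n) ℝ) : Rec A (pfMinor A) := by
  intro m R hm
  obtain ⟨N, hN⟩ : ∃ N, R.card = N := ⟨_, rfl⟩
  let f : Fin N → Fin n := R.orderEmbOfFin hN
  have hf : StrictMono f := (R.orderEmbOfFin hN).strictMono
  have hR : Finset.univ.image f = R := by
    apply Finset.coe_injective
    simp [f]
  have hfm : ∀ k, m < f k := fun k => hm _ (Finset.orderEmbOfFin_mem R hN k)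
  have hmono : StrictMono (Fin.cons m f : Fin (N + 1) → Fin n) := by
    intro a b
    refine Fin.cases ?_ (fun a => ?_) a <;> refine Fin.cases ?_ (fun b => ?_) b
    · intro h; exact absurd h (lt_irrefl _)
    · intro _; simpa using hfm b
    · intro h; simp at h
    · intro h; simpa using hf (Fin.succ_lt_succ_iff.1 h)
  have himg : Finset.univ.image (Fin.cons m f : Fin (N + 1) → Fin n) = insert m R := by
    rw [← hR]; ext x
    simp only [Finset.mem_image, Finset.mem_insert, Finset.mem_univ, true_and, Fin.exists_fin_succ,
      Fin.cons_zero, Fin.cons_succ]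
    tauto
  rw [pfMinor_eq A _ _ hmono himg, dd]
  clear_value f
  cases N with
  | zero =>
    rw [pfaffian_odd _ (by norm_num), ← hR]; simp
  | succ N =>
    rw [pfaffian_succ, ← hR, Finset.sum_image (fun _ _ _ _ h => hf.injective h)]
    apply Finset.sum_congr rfl
    intro j _
    rw [sg_image f hf, pfMinor_eq A _ (f ∘ j.succAbove) (hf.comp (Fin.strictMono_succAbove j))]
    · simp only [Matrix.submatrix_apply, Fin.cons_zero, Fin.cons_succ]
      rfl
    · ext x
      simp only [Finset.mem_image, Finset.mem_erase, Finset.mem_univ, true_and, Function.comp]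
      constructor
      · rintro ⟨k, rfl⟩
        exact ⟨fun h => Fin.succAbove_ne j k (hf.injective h), _, rfl⟩
      · rintro ⟨h, k, rfl⟩
        obtain ⟨l, rfl⟩ := Fin.exists_succAbove_eq (x := k) (y := j) (fun e => h (e ▸ rfl))
        exact ⟨l, rfl⟩

theorem sg_neg_one_pow {n : ℕ} (S : Finset (Fin n)) (j : Fin S.card) :
    sg (S.orderIsoOfFin rfl j : Fin n) S = (-1) ^ (j : ℕ) := by
  have h := sg_image (S.orderEmbOfFin rfl) (S.orderEmbOfFin rfl).strictMono j
  have : Finset.univ.image (S.orderEmbOfFin rfl) = S := by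
    apply Finset.coe_injective; simp
  rw [this] at h
  exact h

theorem wick_fin {n : ℕ} (A : Matrix (Fin n) (Fin n) ℝ) (hA : ∀ i j, A i j = - A j i)
    (S B : Finset (Fin n)) (D : Finset (Fin n)) (hD : D = symmDiff S B) :
    ∑ j : Fin D.card, (-1 : ℝ) ^ ((j : ℕ) + 1) *
      pfMinor A (symmDiff S {(D.orderIsoOfFin rfl j : Fin n)}) *
      pfMinor A (symmDiff B {(D.orderIsoOfFin rfl j : Fin n)}) = 0 := by
  have h := wick A (pfMinor A) hA (pfMinor_rec A) S B
  rw [← hD, ← Finset.sum_coe_sort, ← (D.orderIsoOfFin rfl).toEquiv.sum_comp] at h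
  rw [← neg_eq_zero, ← h, ← Finset.sum_neg_distrib]
  apply Finset.sum_congr rfl
  intro j _
  have := sg_neg_one_pow D j
  change _ = sg (D.orderIsoOfFin rfl j : Fin n) D *
    pfMinor A (symmDiff S {(D.orderIsoOfFin rfl j : Fin n)}) *
    pfMinor A (symmDiff B {(D.orderIsoOfFin rfl j : Fin n)})
  rw [this]; ring

theorem symmDiff_card_parity {n : ℕ} (S T : Finset (Fin n)) :
    (symmDiff S T).card % 2 = (S.card + T.card) % 2 := by
  have h1 : symmDiff S T = (S \ T) ∪ (T \ S) := rfl
  have hdis : Disjoint (S \ T) (T \ S) := by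
    rw [Finset.disjoint_left]; intro x; simp only [Finset.mem_sdiff]; tauto
  rw [h1, Finset.card_union_of_disjoint hdis]
  have h2 := Finset.card_sdiff_add_card_inter S T
  have h3 := Finset.card_sdiff_add_card_inter T S
  rw [Finset.inter_comm] at h3
  omega

/-- Let `A` be a skew-symmetric `n × n` real matrix and `T ⊆ I`.  The map
`p(S) = sign Pf(A_{S Δ T})` is an oriented even Δ-matroid, and its collection of
bases `{S : p S ≠ 0}` is the Δ-matroid represented by `A` and `T` in Bouchet's
sense, namely `{S : det(A_{S Δ T}) ≠ 0}`. -/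
theorem skewMatrix_orientedEvenDeltaMatroid {n : ℕ} (A : Matrix (Fin n) (Fin n) ℝ)
    (hA : A.transpose = -A) (T : Finset (Fin n)) :
    IsOrientedEvenDeltaMatroid (fun S => SignType.sign (pfMinor A (symmDiff S T))) ∧
    ∀ S : Finset (Fin n),
      SignType.sign (pfMinor A (symmDiff S T)) ≠ 0 ↔ detMinor A (symmDiff S T) ≠ 0 := by
  have hA' : ∀ i j, A i j = - A j i := by
    intro i j
    have := congrFun (congrFun hA j) i
    simpa using this
  have hrec := pfMinor_rec A
  have h0 : pfMinor A ∅ ≠ 0 := by rw [pfMinor_empty]; norm_num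
  refine ⟨⟨⟨T, ?_⟩, ?_, ?_⟩, ?_⟩
  · simp only [symmDiff_self, ne_eq, sign_eq_zero_iff]
    exact h0
  · have key : ∀ S, SignType.sign (pfMinor A (symmDiff S T)) ≠ 0 → (S.card + T.card) % 2 = 0 := by
      intro S hS
      rw [← symmDiff_card_parity]
      by_contra hodd
      exact hS (by rw [pfMinor, pfaffian_odd _ (by omega), sign_zero])
    intro S B hS hB
    have := key S hS
    have := key B hB
    omega
  · intro S B w hw hnn
    obtain ⟨r, hr0, hr⟩ : ∃ r : ℝ, r ≠ 0 ∧ SignType.sign r = w := by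
      rcases hw with rfl | rfl
      · exact ⟨1, by norm_num, by simp⟩
      · exact ⟨-1, by norm_num, by simp⟩
    have hD : symmDiff S B = symmDiff (symmDiff S T) (symmDiff B T) := by
      rw [symmDiff_symmDiff_symmDiff_comm, symmDiff_self, symmDiff_bot]
    have hW := wick_fin A hA' (symmDiff S T) (symmDiff B T) (symmDiff S B) hD
    have hx : ∀ (j : Fin (symmDiff S B).card), w * (-1 : SignType) ^ ((j : ℕ) + 1) *
        SignType.sign (pfMinor A (symmDiff (symmDiff S {((symmDiff S B).orderIsoOfFin rfl j : Fin n)}) T)) *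
        SignType.sign (pfMinor A (symmDiff (symmDiff B {((symmDiff S B).orderIsoOfFin rfl j : Fin n)}) T)) =
        SignType.sign (r * ((-1 : ℝ) ^ ((j : ℕ) + 1) *
          pfMinor A (symmDiff (symmDiff S T) {((symmDiff S B).orderIsoOfFin rfl j : Fin n)}) *
          pfMinor A (symmDiff (symmDiff B T) {((symmDiff S B).orderIsoOfFin rfl j : Fin n)}))) := by
      intro j
      rw [symmDiff_right_comm S, symmDiff_right_comm B, sign_mul, sign_mul, sign_mul, sign_pow, hr,
        Left.sign_neg, sign_one]
      simp only [mul_assoc]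
    simp only [hx] at hnn ⊢
    simp only [sign_nonneg_iff, sign_eq_zero_iff] at hnn ⊢
    have hz := (Finset.sum_eq_zero_iff_of_nonneg (fun j _ => hnn j)).1
      (by rw [← Finset.mul_sum, hW, mul_zero])
    exact fun j => hz j (Finset.mem_univ j)
  · intro S
    rw [← det_iff A (pfMinor A) hA' hrec h0, ne_eq, sign_eq_zero_iff]
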